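/- Let f be a non-wandering homeomorphism of 𝕋² homotopic to the identity which is an irrational pseudo-rotation, i.e. there exist a lift F and a totally irrational vector ρ ∈ ℝ² (1, ρ₁, ρ₂ linearly independent over ℚ) with lim_{n→∞}(Fⁿ(z) − z)/n = ρ for all z ∈ ℝ². Then f is topologically transitive. -/

import Mathlib

open Filter Topology

local notation "⟪" x ", " y "⟫" => @inner ℝ _ _ x y

noncomputable section

/-- Euclidean space `ℝ^d`. -/
abbrev Rd (d : ℕ) := EuclideanSpace ℝ (Fin d)

/-- The `d`-torus `𝕋^d = ℝ^d/ℤ^d`, realized as a product of circles. -/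
abbrev Torus (d : ℕ) := Fin d → AddCircle (1 : ℝ)

/-- The quotient map `π : ℝ^d → 𝕋^d`. -/
def projT {d : ℕ} (z : Rd d) : Torus d := fun i => (z i : AddCircle (1 : ℝ))

/-- An integer vector viewed as an element of `ℝ^d`. -/
def intVec {d : ℕ} (m : Fin d → ℤ) : Rd d := WithLp.toLp 2 (fun i => (m i : ℝ))

/-- A real vector viewed as an element of `ℝ^k`. -/
def vecR {k : ℕ} (ρ : Fin k → ℝ) : Rd k := WithLp.toLp 2 (fun i => ρ i)

/-- `F : ℝ^d → ℝ^d` is a lift of `f : 𝕋^d → 𝕋^d`:  `π ∘ F = f ∘ π` and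
`F (z + m) = F z + m` for every integer vector `m`.  The existence of such a lift
expresses that `f` is homotopic to the identity. -/
def IsLift {d : ℕ} (f : Torus d ≃ₜ Torus d) (F : Rd d ≃ₜ Rd d) : Prop :=
  (∀ z : Rd d, projT (F z) = f (projT z)) ∧
  ∀ (z : Rd d) (m : Fin d → ℤ), F (z + intVec m) = F z + intVec m

/-- The `n`-th iterate (`n ∈ ℤ`) of a homeomorphism. -/
def iterZ {X : Type*} [TopologicalSpace X] (F : X ≃ₜ X) (n : ℤ) : X → X := ⇑(F.toEquiv ^ n)

/-- `ρ ∈ ℝ^k` is totally irrational: `1, ρ₁, …, ρ_k` are linearly independent over `ℚ`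
(equivalently, over `ℤ`). -/
def TotallyIrrational {k : ℕ} (ρ : Fin k → ℝ) : Prop :=
  ∀ (m : Fin k → ℤ) (n : ℤ), (∑ i, (m i : ℝ) * ρ i) = (n : ℝ) → m = 0 ∧ n = 0

/-- `f` (with lift `F`) is a pseudo-rotation with rotation vector `ρ` on the invariant
set `K`: `(Fⁿ z − z)/n → ρ` for every `z ∈ π⁻¹(K)`. -/
def IsPseudoRotationOn {d : ℕ} (F : Rd d ≃ₜ Rd d) (ρ : Rd d) (K : Set (Torus d)) : Prop :=
  ∀ z : Rd d, projT z ∈ K →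
    Tendsto (fun n : ℕ => (n : ℝ)⁻¹ • ((⇑F)^[n] z - z)) atTop (𝓝 ρ)

/-- `f` is non-wandering: no nonempty open set `U` satisfies `fⁿ(U) ∩ U = ∅` for all
`n ≥ 1`. -/
def NonWandering {X : Type*} [TopologicalSpace X] (f : X → X) : Prop :=
  ∀ U : Set X, IsOpen U → U.Nonempty → ∃ n : ℕ, 1 ≤ n ∧ (f^[n] '' U ∩ U).Nonempty

/-- `f` is topologically transitive. -/
def TopTransitive {X : Type*} [TopologicalSpace X] (f : X → X) : Prop :=
  ∀ U V : Set X, IsOpen U → IsOpen V → U.Nonempty → V.Nonempty →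
    ∃ n : ℕ, 1 ≤ n ∧ (f^[n] '' U ∩ V).Nonempty

/-- A continuous logarithm differs from the principal branch by a constant along a segment on which
the principal branch is continuous. -/
theorem sub_log_eq_of_re_pos {L : ℝ → ℂ} (hL : Continuous L) {c : ℂ}
    (h : ∀ t ∈ Set.Icc (0 : ℝ) 1, 0 < (c * Complex.exp (L t)).re) :
    L 0 - Complex.log (c * Complex.exp (L 0)) = L 1 - Complex.log (c * Complex.exp (L 1)) := by
  have hc : c ≠ 0 := by
    rintro rfl
    simpa using h 0 (by simp)
  refine Complex.isCoveringMap_exp.constOn_of_comp isPreconnected_Icc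
    (g := fun t => L t - Complex.log (c * Complex.exp (L t))) ?_ ?_
    (by simp : (0 : ℝ) ∈ Set.Icc (0 : ℝ) 1) (by simp : (1 : ℝ) ∈ Set.Icc (0 : ℝ) 1)
  · refine hL.continuousOn.sub (ContinuousOn.clog (by fun_prop) fun t ht => Or.inl (h t ht))
  · intro s _ t _
    have key (t : ℝ) : Complex.exp (L t - Complex.log (c * Complex.exp (L t))) = c⁻¹ := by
      rw [Complex.exp_sub, Complex.exp_log (mul_ne_zero hc (Complex.exp_ne_zero _))]
      field_simp [Complex.exp_ne_zero]
    simp only [Subtype.mk.injEq]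
    rw [key, key]

theorem log_I_mul {w : ℂ} (h : 0 < w.re) (h' : 0 < (Complex.I * w).re) :
    Complex.log (Complex.I * w) = Complex.log w + Real.pi / 2 * Complex.I := by
  have hw : w ≠ 0 := by
    rintro rfl
    simp at h
  have hre : w.im < 0 := by simpa using h'
  have harg : w.arg < 0 := Complex.arg_neg_iff.2 hre
  have := (Complex.log_mul_eq_add_log_iff Complex.I_ne_zero hw).2
    ⟨by rw [Complex.arg_I]; linarith [Complex.neg_pi_lt_arg w, Real.pi_pos],
      by rw [Complex.arg_I]; linarith [Real.pi_pos]⟩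
  rw [this, Complex.log_I]
  ring

/-- The planar Poincaré–Miranda theorem. -/
theorem exists_zero_of_boundary_signs {H : ℝ × ℝ → ℂ} (hH : Continuous H)
    (right : ∀ t ∈ Set.Icc (0 : ℝ) 1, 0 < (H (1, t)).re)
    (left : ∀ t ∈ Set.Icc (0 : ℝ) 1, (H (0, t)).re < 0)
    (top : ∀ s ∈ Set.Icc (0 : ℝ) 1, (H (s, 1)).im < 0)
    (bottom : ∀ s ∈ Set.Icc (0 : ℝ) 1, 0 < (H (s, 0)).im) :
    ∃ p, H p = 0 := by
  by_contra! hne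
  obtain ⟨L, ⟨-, hL⟩, -⟩ := Complex.isCoveringMapOn_exp.existsUnique_continuousMap_lifts
    (⟨H, hH⟩ : C(ℝ × ℝ, ℂ)) (a₀ := 0) (e₀ := Complex.log (H 0))
    (by simp [Complex.exp_log (hne 0)]) (by simpa using hne)
  have hexp (p : ℝ × ℝ) : Complex.exp (L p) = H p := congrFun hL p
  have h0 : (0 : ℝ) ∈ Set.Icc (0 : ℝ) 1 := by simp
  have h1 : (1 : ℝ) ∈ Set.Icc (0 : ℝ) 1 := by simp
  have eR := sub_log_eq_of_re_pos (L := fun t => L (1, t)) (by fun_prop) (c := 1)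
    (by simpa [hexp] using right)
  have eT := sub_log_eq_of_re_pos (L := fun s => L (s, 1)) (by fun_prop) (c := Complex.I * 1)
    (by simpa [hexp] using top)
  have eL := sub_log_eq_of_re_pos (L := fun t => L (0, t)) (by fun_prop)
    (c := Complex.I * (Complex.I * 1))
    (by simpa [hexp, ← mul_assoc] using left)
  have eB := sub_log_eq_of_re_pos (L := fun s => L (s, 0)) (by fun_prop)
    (c := Complex.I * (Complex.I * (Complex.I * 1)))
    (by simpa [hexp, ← mul_assoc] using bottom)
  simp only [hexp, mul_assoc, one_mul] at eR eT eL eB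
  have c11 := log_I_mul (w := H (1, 1)) (right 1 h1) (by simpa using top 1 h1)
  have c01 := log_I_mul (w := Complex.I * H (0, 1)) (by simpa using top 0 h0)
    (by simpa using left 1 h1)
  have c00 := log_I_mul (w := Complex.I * (Complex.I * H (0, 0))) (by simpa using left 0 h0)
    (by simpa using bottom 0 h0)
  have c10 := log_I_mul (w := Complex.I * (Complex.I * (Complex.I * H (1, 0))))
    (by simpa using bottom 1 h1) (by simpa using right 0 h0)
  have hI4 : Complex.I * (Complex.I * (Complex.I * (Complex.I * H (1, 0)))) = H (1, 0) := by
    linear_combination (Complex.I ^ 2 - 1) * H (1, 0) * Complex.I_sq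
  rw [hI4] at c10
  have : (2 * Real.pi : ℂ) * Complex.I = 0 := by
    linear_combination eT - eR + eL - eB - c11 - c01 - c00 - c10
  simp [Real.pi_ne_zero] at this

theorem JoinedIn.add_nsmul {X : Type*} [TopologicalSpace X] [AddCommMonoid X] [ContinuousAdd X]
    {S : Set X} {x v : X} (hS : ∀ p ∈ S, p + v ∈ S) (h : JoinedIn S x (x + v)) (k : ℕ) :
    JoinedIn S x (x + k • v) := by
  induction k with
  | zero => simpa using JoinedIn.refl h.source_mem
  | succ k ih =>
    have h' : JoinedIn S (x + v) (x + k • v + v) :=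
      (ih.map (f := fun p => p + v) (by fun_prop)).mono (Set.image_subset_iff.2 hS)
    have e : x + (k + 1) • v = x + k • v + v := by rw [succ_nsmul, add_assoc]
    rw [e]
    exact h.trans h'

/-- A path-connected set invariant under a translation in one coordinate direction contains
arbitrarily long paths in that direction which stay in a fixed strip. -/
theorem exists_long_path_in_strip {ι : Type*} [Fintype ι] {D : Set (EuclideanSpace ℝ ι)}
    (hD : IsPathConnected D) {v : EuclideanSpace ℝ ι} (hadd : ∀ p ∈ D, p + v ∈ D)
    (hsub : ∀ p ∈ D, p - v ∈ D) {i j : ι} (hi : 0 < v i) (hj : v j = 0) :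
    ∃ C : ℝ, ∀ R : ℝ, ∃ (a b : EuclideanSpace ℝ ι) (γ : Path a b),
      a i < -R ∧ R < b i ∧ ∀ t, γ t ∈ D ∧ |γ t j| ≤ C := by
  obtain ⟨x, hx⟩ := hD.nonempty
  obtain ⟨γ, hγ⟩ := hD.joinedIn x hx (x + v) (hadd x hx)
  obtain ⟨C, hC⟩ := isCompact_univ.exists_bound_of_continuousOn
    (f := fun t => γ t j) (by fun_prop)
  set S : Set (EuclideanSpace ℝ ι) := {p | p ∈ D ∧ |p j| ≤ C}
  have hSadd : ∀ p ∈ S, p + v ∈ S := fun p hp => ⟨hadd p hp.1, by simpa [hj] using hp.2⟩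
  have hSsub : ∀ p ∈ S, p + -v ∈ S := fun p hp =>
    ⟨by simpa [sub_eq_add_neg] using hsub p hp.1, by simpa [hj] using hp.2⟩
  have hjoin : JoinedIn S x (x + v) :=
    ⟨γ, fun t => ⟨hγ t, by simpa using hC t (Set.mem_univ t)⟩⟩
  have hjoin' : JoinedIn S x (x + -v) := by
    have : JoinedIn S (x + -v) (x + v + -v) :=
      (hjoin.map (f := fun p => p + -v) (by fun_prop)).mono (Set.image_subset_iff.2 hSsub)
    simpa using this.symm
  refine ⟨C, fun R => ?_⟩
  obtain ⟨k, hk⟩ := exists_nat_gt ((R + |x i|) / v i)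
  rw [div_lt_iff₀ hi] at hk
  obtain ⟨δ, hδ⟩ := (hjoin'.add_nsmul hSsub k).symm.trans (hjoin.add_nsmul hSadd k)
  refine ⟨_, _, δ, ?_, ?_, hδ⟩
  · have := le_abs_self (x i)
    simp
    linarith
  · have := neg_abs_le (x i)
    simp
    linarith

/-- Two path-connected planar sets, one invariant under a horizontal translation and the other
under a vertical one, intersect. -/
theorem inter_nonempty_of_invariant_translations {D E : Set (Rd 2)} (hD : IsPathConnected D)
    (hE : IsPathConnected E) {v w : Rd 2} (hv0 : 0 < v 0) (hv1 : v 1 = 0) (hw0 : w 0 = 0)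
    (hw1 : 0 < w 1) (hDadd : ∀ p ∈ D, p + v ∈ D) (hDsub : ∀ p ∈ D, p - v ∈ D)
    (hEadd : ∀ p ∈ E, p + w ∈ E) (hEsub : ∀ p ∈ E, p - w ∈ E) : (D ∩ E).Nonempty := by
  obtain ⟨C, hC⟩ := exists_long_path_in_strip hD hDadd hDsub hv0 hv1
  obtain ⟨C', hC'⟩ := exists_long_path_in_strip hE hEadd hEsub hw1 hw0
  obtain ⟨a, b, α, ha, hb, hα⟩ := hC C'
  obtain ⟨a', b', β, ha', hb', hβ⟩ := hC' C
  have hα' (t : ℝ) : α.extend t ∈ D ∧ |α.extend t 1| ≤ C := hα _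
  have hβ' (t : ℝ) : β.extend t ∈ E ∧ |β.extend t 0| ≤ C' := hβ _
  obtain ⟨⟨s, t⟩, hst⟩ := exists_zero_of_boundary_signs
    (H := fun p => (⟨α.extend p.1 0 - β.extend p.2 0, α.extend p.1 1 - β.extend p.2 1⟩ : ℂ))
    (by
      have : Continuous fun p : ℝ × ℝ =>
          ((α.extend p.1 0 - β.extend p.2 0 : ℝ) : ℂ) +
            ((α.extend p.1 1 - β.extend p.2 1 : ℝ) : ℂ) * Complex.I := by fun_prop
      simpa only [Complex.mk_eq_add_mul_I] using this)
    (fun t _ => by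
      have := abs_le.1 (hβ' t).2
      simp
      linarith)
    (fun t _ => by
      have := abs_le.1 (hβ' t).2
      simp
      linarith)
    (fun s _ => by
      have := abs_le.1 (hα' s).2
      simp
      linarith)
    (fun s _ => by
      have := abs_le.1 (hα' s).2
      simp
      linarith)
  have hst' := Complex.ext_iff.1 hst
  simp only [Complex.zero_re, Complex.zero_im, sub_eq_zero] at hst'
  have e : α.extend s = β.extend t := by
    ext i
    fin_cases i
    exacts [hst'.1, hst'.2]
  exact ⟨α.extend s, (hα' s).1, e ▸ (hβ' t).1⟩

theorem intVec_zero {d : ℕ} : (intVec 0 : Rd d) = 0 := by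
  ext i
  simp [intVec]

theorem intVec_add {d : ℕ} (m n : Fin d → ℤ) : intVec (m + n) = intVec m + intVec n := by
  ext i
  simp [intVec]

theorem intVec_neg {d : ℕ} (m : Fin d → ℤ) : intVec (-m) = -intVec m := by
  ext i
  simp [intVec]

/-- A subgroup of `ℤ²` whose orthogonal complement is trivial contains multiples of both basis
vectors. -/
theorem exists_pos_axes_mem {S : AddSubgroup (Fin 2 → ℤ)}
    (hS : ∀ w : Fin 2 → ℤ, (∀ v ∈ S, w 0 * v 0 + w 1 * v 1 = 0) → w = 0) :
    ∃ N : ℤ, 0 < N ∧ ![N, 0] ∈ S ∧ ![0, N] ∈ S := by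
  obtain ⟨v, hv, hv0⟩ : ∃ v ∈ S, v 0 ≠ 0 := by
    by_contra! h
    have := congrFun (hS ![1, 0] fun v hv => by simp [h v hv]) 0
    simp at this
  obtain ⟨u, hu, hd⟩ : ∃ u ∈ S, v 0 * u 1 - v 1 * u 0 ≠ 0 := by
    by_contra! h
    have := congrFun (hS ![-v 1, v 0] fun u hu => by simp; linarith [h u hu]) 1
    exact hv0 (by simpa using this)
  have key : ∀ N : ℤ, N = v 0 * u 1 - v 1 * u 0 → ![N, 0] ∈ S ∧ ![0, N] ∈ S := by
    rintro _ rfl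
    constructor
    · convert S.sub_mem (S.zsmul_mem hv (u 1)) (S.zsmul_mem hu (v 1)) using 1
      ext i
      fin_cases i <;> simp <;> ring
    · convert S.sub_mem (S.zsmul_mem hu (v 0)) (S.zsmul_mem hv (u 0)) using 1
      ext i
      fin_cases i <;> simp <;> ring
  obtain ⟨h1, h2⟩ := key _ rfl
  rcases lt_or_gt_of_ne hd with h | h
  · refine ⟨-(v 0 * u 1 - v 1 * u 0), by linarith, ?_, ?_⟩
    · simpa using S.neg_mem h1
    · simpa using S.neg_mem h2
  · exact ⟨_, h, h1, h2⟩

section Component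

variable {d : ℕ} {G : Rd d → Rd d} {A : Set (Rd d)} {x : Rd d}

theorem iterate_add_intVec (hG : ∀ z m, G (z + intVec m) = G z + intVec m) (n : ℕ) (z : Rd d)
    (m : Fin d → ℤ) : G^[n] (z + intVec m) = G^[n] z + intVec m := by
  induction n generalizing z with
  | zero => rfl
  | succ n ih => rw [Function.iterate_succ_apply, hG, ih, Function.iterate_succ_apply]

/-- If `z ↦ Gⁿ z + m` sends one point of a component of an invariant set back into that component,
then it maps the whole component into itself. -/
theorem iterate_add_mem_component (hcont : Continuous G) (hGA : ∀ z ∈ A, G z ∈ A)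
    (hA : ∀ z ∈ A, ∀ m, z + intVec m ∈ A) {n : ℕ} {m : Fin d → ℤ} {y : Rd d}
    (hy : y ∈ connectedComponentIn A x) (hy' : G^[n] y + intVec m ∈ connectedComponentIn A x)
    {z : Rd d} (hz : z ∈ connectedComponentIn A x) :
    G^[n] z + intVec m ∈ connectedComponentIn A x := by
  have hpre : IsPreconnected ((fun z => G^[n] z + intVec m) '' connectedComponentIn A x) :=
    isPreconnected_connectedComponentIn.image _
      ((hcont.iterate n).add continuous_const).continuousOn
  have hsub : (fun z => G^[n] z + intVec m) '' connectedComponentIn A x ⊆ A := by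
    rintro _ ⟨p, hp, rfl⟩
    exact hA _ (Set.MapsTo.iterate hGA n (connectedComponentIn_subset A x hp)) m
  rw [connectedComponentIn_eq hy']
  exact hpre.subset_connectedComponentIn ⟨y, hy, rfl⟩ hsub ⟨z, hz, rfl⟩

/-- The group of integer translations preserving a component of a `ℤ^d`-invariant set. -/
def componentStabilizer (hA : ∀ z ∈ A, ∀ m, z + intVec m ∈ A) (hx : x ∈ A) :
    AddSubgroup (Fin d → ℤ) where
  carrier := {v | ∀ y ∈ connectedComponentIn A x, y + intVec v ∈ connectedComponentIn A x}
  zero_mem' y hy := by simpa [intVec_zero] using hy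
  add_mem' {v w} hv hw y hy := by
    rw [intVec_add, ← add_assoc]
    exact hw _ (hv _ hy)
  neg_mem' {v} hv y hy := by
    have hx' := mem_connectedComponentIn hx
    exact iterate_add_mem_component (G := id) (n := 0) continuous_id (fun _ h => h) hA
      (hv x hx') (by simpa [intVec_neg] using hx') hy

theorem iterate_mul_add_mem_component (hG : ∀ z m, G (z + intVec m) = G z + intVec m) {n : ℕ}
    {m : Fin d → ℤ} {D : Set (Rd d)} (h : ∀ y ∈ D, G^[n] y + intVec m ∈ D) (j : ℕ) :
    ∀ y ∈ D, G^[n * j] y + intVec (j • m) ∈ D := by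
  induction j with
  | zero => simp [intVec_zero]
  | succ j ih =>
    intro y hy
    have := h _ (ih y hy)
    rw [iterate_add_intVec hG, add_assoc, ← intVec_add, ← Function.iterate_add_apply] at this
    rwa [Nat.mul_succ, Nat.add_comm (n * j), succ_nsmul]

theorem sub_mem_componentStabilizer (hcont : Continuous G)
    (hG : ∀ z m, G (z + intVec m) = G z + intVec m) (hGA : ∀ z ∈ A, G z ∈ A)
    (hA : ∀ z ∈ A, ∀ m, z + intVec m ∈ A) (hx : x ∈ A) {n n' : ℕ} {m m' : Fin d → ℤ}
    (h : ∃ y ∈ connectedComponentIn A x, G^[n] y + intVec m ∈ connectedComponentIn A x)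
    (h' : ∃ y ∈ connectedComponentIn A x, G^[n'] y + intVec m' ∈ connectedComponentIn A x) :
    n • m' - n' • m ∈ componentStabilizer hA hx := by
  obtain ⟨y, hy, hy'⟩ := h
  obtain ⟨u, hu, hu'⟩ := h'
  have hx' := mem_connectedComponentIn hx
  have h1 := iterate_mul_add_mem_component hG
    (fun z hz => iterate_add_mem_component hcont hGA hA hy hy' hz) n' x hx'
  have h2 := iterate_mul_add_mem_component hG
    (fun z hz => iterate_add_mem_component hcont hGA hA hu hu' hz) n x hx'
  intro z hz
  refine iterate_add_mem_component (G := id) (n := 0) continuous_id (fun _ h => h) hA h1 ?_ hz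
  rw [mul_comm n' n] at h2
  simpa [add_assoc, ← intVec_add] using h2

end Component

/-- If a component returns to integer translates of itself with totally irrational asymptotic
rotation vector, then it is invariant under translations in both coordinate directions. -/
theorem exists_pos_axes_mem_componentStabilizer {G : Rd 2 → Rd 2} {A : Set (Rd 2)} {x : Rd 2}
    (hcont : Continuous G) (hG : ∀ z m, G (z + intVec m) = G z + intVec m)
    (hGA : ∀ z ∈ A, G z ∈ A) (hA : ∀ z ∈ A, ∀ m, z + intVec m ∈ A) (hx : x ∈ A)
    {σ : Rd 2} (hσ : TotallyIrrational fun i => σ i) {n : ℕ → ℕ} {m : ℕ → Fin 2 → ℤ}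
    (hn : ∀ k, 1 ≤ n k)
    (hret : ∀ᶠ k in atTop, ∃ y ∈ connectedComponentIn A x,
      G^[n k] y + intVec (m k) ∈ connectedComponentIn A x)
    (hlim : Tendsto (fun k => (n k : ℝ)⁻¹ • intVec (m k)) atTop (𝓝 σ)) :
    ∃ N : ℤ, 0 < N ∧ ![N, 0] ∈ componentStabilizer hA hx ∧
      ![0, N] ∈ componentStabilizer hA hx := by
  refine exists_pos_axes_mem fun w hw => ?_
  obtain ⟨K, hK⟩ := hret.exists
  have hcoord (i : Fin 2) : Tendsto (fun k => (n k : ℝ)⁻¹ * (m k i : ℝ)) atTop (𝓝 (σ i)) := by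
    have := ((EuclideanSpace.proj (𝕜 := ℝ) i).continuous.tendsto σ).comp hlim
    simpa [Function.comp_def, intVec] using this
  have hlim' : Tendsto (fun k => (n K : ℝ) * (w 0 * ((n k : ℝ)⁻¹ * (m k 0 : ℝ)) +
      w 1 * ((n k : ℝ)⁻¹ * (m k 1 : ℝ)))) atTop
      (𝓝 ((n K : ℝ) * (w 0 * σ 0 + w 1 * σ 1))) :=
    (((hcoord 0).const_mul _).add ((hcoord 1).const_mul _)).const_mul _
  have hconst : (fun k => (n K : ℝ) * (w 0 * ((n k : ℝ)⁻¹ * (m k 0 : ℝ)) +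
      w 1 * ((n k : ℝ)⁻¹ * (m k 1 : ℝ)))) =ᶠ[atTop]
      fun _ => ((w 0 * m K 0 + w 1 * m K 1 : ℤ) : ℝ) := by
    filter_upwards [hret] with k hk
    have h := hw _ (sub_mem_componentStabilizer hcont hG hGA hA hx hK hk)
    have hnk : (n k : ℝ) ≠ 0 := by
      have := hn k
      positivity
    have h' : (w 0 * (n K * m k 0 - n k * m K 0) + w 1 * (n K * m k 1 - n k * m K 1) : ℝ) = 0 := by
      exact_mod_cast (by simpa using h)
    push_cast
    field_simp
    linarith
  have heq := tendsto_nhds_unique (hlim'.congr' hconst) tendsto_const_nhds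
  have := (hσ ((n K : ℤ) • w) (w 0 * m K 0 + w 1 * m K 1) (by
    rw [← heq, Fin.sum_univ_two]
    push_cast [Pi.smul_apply, smul_eq_mul]
    ring)).1
  have hnK : (n K : ℤ) ≠ 0 := by
    have := hn K
    positivity
  exact (smul_eq_zero.1 this).resolve_left hnK

theorem projT_add_intVec {d : ℕ} (z : Rd d) (m : Fin d → ℤ) : projT (z + intVec m) = projT z := by
  ext i
  simp [projT, intVec]

theorem exists_eq_add_intVec_of_projT_eq {d : ℕ} {z w : Rd d} (h : projT z = projT w) :
    ∃ m, z = w + intVec m := by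
  have (i : Fin d) : ∃ n : ℤ, n • (1 : ℝ) = z i - w i := by
    rw [← AddCircle.coe_eq_zero_iff, AddCircle.coe_sub, sub_eq_zero]
    exact congrFun h i
  choose m hm using this
  refine ⟨m, ?_⟩
  ext i
  have := hm i
  simp only [zsmul_eq_mul, mul_one] at this
  simp [intVec, this]

theorem continuous_projT {d : ℕ} : Continuous (projT : Rd d → Torus d) :=
  continuous_pi fun i =>
    (AddCircle.continuous_mk' 1).comp (EuclideanSpace.proj (𝕜 := ℝ) i).continuous

theorem surjective_projT {d : ℕ} : Function.Surjective (projT : Rd d → Torus d) := by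
  intro t
  choose z hz using fun i => QuotientAddGroup.mk_surjective (t i)
  exact ⟨WithLp.toLp 2 z, funext hz⟩

theorem isOpenMap_projT {d : ℕ} : IsOpenMap (projT : Rd d → Torus d) :=
  (IsOpenMap.piMap (fun _ => QuotientAddGroup.isOpenMap_coe)
    (Filter.Eventually.of_forall fun _ => QuotientAddGroup.mk_surjective)).comp
    (EuclideanSpace.equiv (Fin d) ℝ).toHomeomorph.isOpenMap

theorem NonWandering.exists_ge {X : Type*} [TopologicalSpace X] {f : X → X} (hf : NonWandering f)
    (hcont : Continuous f) (k : ℕ) {U : Set X} (hU : IsOpen U) (hne : U.Nonempty) :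
    ∃ n, k + 1 ≤ n ∧ ∃ x ∈ U, f^[n] x ∈ U := by
  induction k generalizing U with
  | zero =>
    obtain ⟨n, hn, _, ⟨x, hx, rfl⟩, hx'⟩ := hf U hU hne
    exact ⟨n, by simpa using hn, x, hx, hx'⟩
  | succ k ih =>
    obtain ⟨n, hn, _, ⟨x, hx, rfl⟩, hx'⟩ := hf U hU hne
    obtain ⟨n', hn', y, hy, hy'⟩ := ih (hU.inter (hU.preimage (hcont.iterate n))) ⟨x, hx, hx'⟩
    exact ⟨n + n', by omega, y, hy.1, by rw [Function.iterate_add_apply]; exact hy'.2⟩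

theorem IsLift.semiconj {d : ℕ} {f : Torus d ≃ₜ Torus d} {F : Rd d ≃ₜ Rd d} (hF : IsLift f F)
    (n : ℕ) (z : Rd d) : projT (F^[n] z) = f^[n] (projT z) :=
  (Function.Semiconj.iterate_right (f := projT) hF.1 n) z

/-- For a lift of a non-wandering homeomorphism, points recurrent modulo `ℤ^d` are dense. -/
theorem IsLift.exists_recurrent {d : ℕ} {f : Torus d ≃ₜ Torus d} {F : Rd d ≃ₜ Rd d}
    (hF : IsLift f F) (hnw : NonWandering f) {W : Set (Rd d)} (hW : IsOpen W)
    (hne : W.Nonempty) :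
    ∃ z ∈ W, ∃ (n : ℕ → ℕ) (m : ℕ → Fin d → ℤ), (∀ k, k + 1 ≤ n k) ∧
      Tendsto (fun k => F^[n k] z - intVec (m k)) atTop (𝓝 z) := by
  let R (k : ℕ) : Set (Rd d) := ⋃ (n : ℕ) (_ : k + 1 ≤ n) (m : Fin d → ℤ),
    {z | dist (F^[n] z - intVec m) z < 1 / ((k : ℝ) + 1)}
  have hcont (n : ℕ) : Continuous (F^[n]) := F.continuous.iterate n
  have hopen (k : ℕ) : IsOpen (R k) :=
    isOpen_iUnion fun n => isOpen_iUnion fun _ => isOpen_iUnion fun m =>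
      isOpen_lt (((hcont n).sub continuous_const).dist continuous_id) continuous_const
  have hdense (k : ℕ) : Dense (R k) := by
    refine dense_iff_inter_open.2 fun O hO ⟨p, hp⟩ => ?_
    have hpos : (0 : ℝ) < 1 / ((k : ℝ) + 1) / 2 := by positivity
    obtain ⟨n, hn, _, ⟨y, hy, rfl⟩, hy'⟩ := hnw.exists_ge f.continuous k
      (isOpenMap_projT _ (hO.inter Metric.isOpen_ball))
      ⟨projT p, p, ⟨hp, Metric.mem_ball_self hpos⟩, rfl⟩
    rw [← hF.semiconj] at hy'
    obtain ⟨q, hq, hqy⟩ := hy'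
    obtain ⟨m, hm⟩ := exists_eq_add_intVec_of_projT_eq hqy.symm
    refine ⟨y, hy.1, Set.mem_iUnion₂.2 ⟨n, hn, Set.mem_iUnion.2 ⟨m, ?_⟩⟩⟩
    simp only [Set.mem_ofPred_eq, hm, add_sub_cancel_right]
    have h1 := Metric.mem_ball.1 hq.2
    have h2 := Metric.mem_ball'.1 hy.2
    linarith [dist_triangle q p y]
  obtain ⟨z, hzW, hz⟩ := (dense_iInter_of_isOpen_nat hopen hdense).inter_open_nonempty W hW hne
  have hz' (k : ℕ) : ∃ (n : ℕ) (m : Fin d → ℤ), k + 1 ≤ n ∧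
      dist (F^[n] z - intVec m) z < 1 / ((k : ℝ) + 1) := by
    simpa [R] using Set.mem_iInter.1 hz k
  choose n m hn hm using hz'
  exact ⟨z, hzW, n, m, hn, tendsto_iff_dist_tendsto_zero.2 <|
    squeeze_zero (fun _ => dist_nonneg) (fun k => (hm k).le) tendsto_one_div_add_atTop_nhds_zero_nat⟩

/-- The integer displacements of a recurrent point have the rotation vector of that point. -/
theorem tendsto_intVec_of_recurrent {d : ℕ} {F : Rd d → Rd d} {ρ z : Rd d}
    (hrot : Tendsto (fun n : ℕ => (n : ℝ)⁻¹ • (F^[n] z - z)) atTop (𝓝 ρ)) {n : ℕ → ℕ}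
    {m : ℕ → Fin d → ℤ} (hn : ∀ k, k + 1 ≤ n k)
    (hrec : Tendsto (fun k => F^[n k] z - intVec (m k)) atTop (𝓝 z)) :
    Tendsto (fun k => (n k : ℝ)⁻¹ • intVec (m k)) atTop (𝓝 ρ) := by
  have hn' : Tendsto n atTop atTop :=
    tendsto_atTop_mono (fun k => (Nat.le_succ k).trans (hn k)) tendsto_id
  have h1 := hrot.comp hn'
  have h2 : Tendsto (fun k => (n k : ℝ)⁻¹ • (F^[n k] z - intVec (m k) - z)) atTop (𝓝 0) := by
    simpa using ((tendsto_inv_atTop_zero (𝕜 := ℝ)).comp (tendsto_natCast_atTop_atTop.comp hn')).smul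
      (hrec.sub_const z)
  have h3 := h1.sub h2
  rw [sub_zero] at h3
  refine h3.congr fun k => ?_
  simp only [Function.comp_apply, ← smul_sub]
  congr 1
  abel

theorem TotallyIrrational.neg {k : ℕ} {ρ : Fin k → ℝ} (h : TotallyIrrational ρ) :
    TotallyIrrational (-ρ) := by
  intro m n hmn
  obtain ⟨hm, hn⟩ := h m (-n) (by simpa [← neg_eq_iff_eq_neg] using hmn)
  exact ⟨hm, neg_eq_zero.1 hn⟩

/-- The forward saturation of `W` under a homeomorphism. -/
def forwardOrbit {X : Type*} [TopologicalSpace X] (G : X ≃ₜ X) (W : Set X) : Set X :=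
  ⋃ (n : ℕ) (_ : 1 ≤ n), G.symm^[n] ⁻¹' W

section ForwardOrbit

variable {X : Type*} [TopologicalSpace X] {G : X ≃ₜ X} {W : Set X}

theorem mem_forwardOrbit {z : X} : z ∈ forwardOrbit G W ↔ ∃ n, 1 ≤ n ∧ G.symm^[n] z ∈ W := by
  simp [forwardOrbit]

theorem IsOpen.forwardOrbit (hW : IsOpen W) : IsOpen (forwardOrbit G W) :=
  isOpen_iUnion fun n => isOpen_iUnion fun _ => hW.preimage (G.symm.continuous.iterate n)

theorem map_mem_forwardOrbit {z : X} (hz : z ∈ forwardOrbit G W) : G z ∈ forwardOrbit G W := by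
  obtain ⟨n, hn, h⟩ := mem_forwardOrbit.1 hz
  exact mem_forwardOrbit.2 ⟨n + 1, by omega, by simpa using h⟩

theorem forwardOrbit_nonempty (hW : W.Nonempty) : (forwardOrbit G W).Nonempty := by
  obtain ⟨z, hz⟩ := hW
  exact ⟨G z, mem_forwardOrbit.2 ⟨1, le_rfl, by simpa using hz⟩⟩

end ForwardOrbit

theorem add_intVec_mem_forwardOrbit {d : ℕ} {G : Rd d ≃ₜ Rd d} {U : Set (Torus d)}
    (hG : ∀ z m, G.symm (z + intVec m) = G.symm z + intVec m) :
    ∀ z ∈ forwardOrbit G (projT ⁻¹' U), ∀ m, z + intVec m ∈ forwardOrbit G (projT ⁻¹' U) := by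
  intro z hz m
  obtain ⟨n, hn, h⟩ := mem_forwardOrbit.1 hz
  refine mem_forwardOrbit.2 ⟨n, hn, ?_⟩
  rwa [iterate_add_intVec hG, Set.mem_preimage, projT_add_intVec]

theorem isPathConnected_connectedComponentIn {d : ℕ} {A : Set (Rd d)} {x : Rd d} (hA : IsOpen A)
    (hx : x ∈ A) : IsPathConnected (connectedComponentIn A x) :=
  hA.connectedComponentIn.isConnected_iff_isPathConnected.1
    (isConnected_connectedComponentIn_iff.2 hx)

theorem sub_mem_of_mem_componentStabilizer {d : ℕ} {A : Set (Rd d)} {x : Rd d}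
    {hA : ∀ z ∈ A, ∀ m, z + intVec m ∈ A} {hx : x ∈ A} {v : Fin d → ℤ}
    (hv : v ∈ componentStabilizer hA hx) :
    ∀ y ∈ connectedComponentIn A x, y - intVec v ∈ connectedComponentIn A x := fun y hy => by
  simpa [intVec_neg, sub_eq_add_neg] using neg_mem hv y hy

/-- **Corollary E.**  Any non-wandering irrational pseudo-rotation `f ∈ Homeo₀(𝕋²)` is
topologically transitive. -/
theorem statement8 (f : Torus 2 ≃ₜ Torus 2) (hnw : NonWandering (⇑f))
    (F : Rd 2 ≃ₜ Rd 2) (hF : IsLift f F) (ρ : Rd 2)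
    (hρ : TotallyIrrational (fun i => ρ i)) (hpr : IsPseudoRotationOn F ρ Set.univ) :
    TopTransitive (⇑f) := by
  intro U V hU hV hUne hVne
  by_contra! hUV
  have hFsymm (z : Rd 2) (m : Fin 2 → ℤ) :
      F.symm (z + intVec m) = F.symm z + intVec m := by
    rw [F.symm_apply_eq, hF.2, F.apply_symm_apply]
  set A := forwardOrbit F (projT ⁻¹' U)
  set B := forwardOrbit F.symm (projT ⁻¹' V)
  have hAopen : IsOpen A := (hU.preimage continuous_projT).forwardOrbit
  have hBopen : IsOpen B := (hV.preimage continuous_projT).forwardOrbit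
  have hA : ∀ z ∈ A, ∀ m, z + intVec m ∈ A := add_intVec_mem_forwardOrbit hFsymm
  have hB : ∀ z ∈ B, ∀ m, z + intVec m ∈ B := add_intVec_mem_forwardOrbit hF.2
  obtain ⟨z, hz, n, m, hn, hrec⟩ := hF.exists_recurrent hnw hAopen
    (forwardOrbit_nonempty (hUne.preimage surjective_projT))
  obtain ⟨z', hz', n', m', hn', hrec'⟩ := hF.exists_recurrent hnw hBopen
    (forwardOrbit_nonempty (hVne.preimage surjective_projT))
  have hD := hAopen.connectedComponentIn.mem_nhds (mem_connectedComponentIn hz)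
  have hE := hBopen.connectedComponentIn.mem_nhds (mem_connectedComponentIn hz')
  obtain ⟨N, hN, hN0, -⟩ := exists_pos_axes_mem_componentStabilizer F.continuous hF.2
    (fun _ => map_mem_forwardOrbit) hA hz (σ := -ρ) (m := fun k => -m k) hρ.neg
    (fun k => le_add_self.trans (hn k))
    (by
      filter_upwards [hrec hD] with k hk
      exact ⟨z, mem_connectedComponentIn hz, by simpa [intVec_neg, sub_eq_add_neg] using hk⟩)
    (by
      simpa [intVec_neg] using
        (tendsto_intVec_of_recurrent (hpr z (Set.mem_univ _)) hn hrec).neg)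
  obtain ⟨M, hM, -, hM1⟩ := exists_pos_axes_mem_componentStabilizer F.symm.continuous hFsymm
    (fun _ => map_mem_forwardOrbit) hB hz' hρ (fun k => le_add_self.trans (hn' k))
    (by
      filter_upwards [hrec' hE] with k hk
      refine ⟨_, hk, ?_⟩
      rw [← iterate_add_intVec hFsymm, sub_add_cancel,
        (Function.LeftInverse.iterate F.symm_apply_apply (n' k)) z']
      exact mem_connectedComponentIn hz')
    (tendsto_intVec_of_recurrent (hpr z' (Set.mem_univ _)) hn' hrec')
  obtain ⟨p, hpD, hpE⟩ := inter_nonempty_of_invariant_translations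
    (isPathConnected_connectedComponentIn hAopen hz)
    (isPathConnected_connectedComponentIn hBopen hz')
    (v := intVec ![N, 0]) (w := intVec ![0, M]) (by simpa [intVec] using hN) (by simp [intVec])
    (by simp [intVec]) (by simpa [intVec] using hM) hN0
    (sub_mem_of_mem_componentStabilizer hN0) hM1 (sub_mem_of_mem_componentStabilizer hM1)
  obtain ⟨i, hi, hpU⟩ := mem_forwardOrbit.1 (connectedComponentIn_subset _ _ hpD)
  obtain ⟨j, hj, hpV⟩ := mem_forwardOrbit.1 (connectedComponentIn_subset _ _ hpE)
  have hp : F^[j + i] (F.symm^[i] p) = F^[j] p := by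
    rw [Function.iterate_add_apply, (Function.LeftInverse.iterate F.apply_symm_apply i) p]
  refine Set.eq_empty_iff_forall_notMem.1 (hUV (j + i) (by omega)) (projT (F^[j] p))
    ⟨⟨_, hpU, ?_⟩, hpV⟩
  rw [← hF.semiconj, hp]
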